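/- arXiv:2111.03213 — 2 statements merged into one kernel-verified Lean document; each statement's English description precedes it below -/
import Mathlib

section
/- For every S = {s₁ < s₂ < ⋯ < s_{|S|}} in H_{n,min{k,n−k}} with |S| ≤ k ≤ n − |S|, the squared ℓ₂-norm of P↑_{n,|S|,k} χ_{n,S} equals [(n − 2|S|)! (k − |S|)! / (n − k − |S|)!] times the product over i = 1,…,|S| of (s_i − 2i + 2)/(s_i − 2i + 1). -/
/-! Extend functions on slices by zero to the cube `{0,1}^n`, so that the up operator `U` and its
adjoint `D` act on one space. Splitting off the last coordinate writes a function as a pair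
`(f₀, f₁)`, and then `U (f₀, f₁) = (U f₀, f₀ + U f₁)`, `D (f₀, f₁) = (D f₀ + f₁, D f₁)`. Induction
on `n` gives `D U - U D = n - 2 |x|` (`cubeDown_cubeUp`).

If `f` lives on weight `m` and is harmonic (`D f = 0`), then
`D U^(d+1) f = (d + 1) (n - 2 m - d) U^d f`, so adjointness yields
`‖U^d f‖² = (n - 2m)! d! / (n - 2m - d)! ‖f‖²` (`norm_iter_factorial`).

It remains to see that `χ_{n,S}` is harmonic with squared norm the product over `S`
(`chiExt_spec`). If `n ∉ S` then `χ_{n,S} = (χ_{n-1,S}, 0)`. If `n ∈ S`, write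
`g = χ_{n-1,S∖{n}}` and `q = n - 2 |S| + 1 > 0`, so `χ_{n,S} = (-U g / q, g)`. Since `D g = 0` and
`D U g = q g`, this is harmonic, with squared norm `(1 / q + 1) ‖g‖²`; the factor `(q + 1) / q` is
the one belonging to the largest element `n` of `S`. -/


open scoped Classical

/-- The slice `C([n],k)`: vectors in `{0,1}^n` with exactly `k` ones. -/
abbrev Slice (n k : ℕ) :=
  {x : Fin n → Bool // (Finset.univ.filter fun i => x i = true).card = k}

/-- The up operator `P↑_{n,k}`. -/
noncomputable def upOp (n k : ℕ) : Matrix (Slice n (k + 1)) (Slice n k) ℝ :=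
  Matrix.of fun x y => if ∀ i, y.1 i = true → x.1 i = true then (1 : ℝ) else 0

/-- The down operator `P↓_{n,k}` (the transpose of `P↑_{n,k-1}`); it is the zero
matrix for `k = 0`. -/
noncomputable def downOp (n k : ℕ) : Matrix (Slice n (k - 1)) (Slice n k) ℝ :=
  Matrix.of fun x y => if 0 < k ∧ ∀ i, x.1 i = true → y.1 i = true then (1 : ℝ) else 0

noncomputable def upPathAux (n i : ℕ) : (d : ℕ) → Matrix (Slice n (i + d)) (Slice n i) ℝ
  | 0 => show Matrix (Slice n (i + 0)) (Slice n i) ℝ from (1 : Matrix (Slice n i) (Slice n i) ℝ)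
  | d + 1 => upOp n (i + d) * upPathAux n i d

/-- The iterated up operator `P↑_{n,i,k} = P↑_{n,k-1} ⋯ P↑_{n,i}`. -/
noncomputable def upPath (n i k : ℕ) : Matrix (Slice n k) (Slice n i) ℝ :=
  if h : i ≤ k then
    cast (by rw [Nat.add_sub_cancel' h]) (upPathAux n i (k - i))
  else 0

/-- `P∨_{n,k} = P↑_{n,k-1} P↓_{n,k}`. -/
noncomputable def upDown (n k : ℕ) : Matrix (Slice n k) (Slice n k) ℝ :=
  if h : 1 ≤ k then
    cast (by rw [Nat.sub_add_cancel h]) (upOp n (k - 1) * downOp n k)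
  else 0

/-- `P∧_{n,k} = P↓_{n,k+1} P↑_{n,k}`. -/
noncomputable def downUp (n k : ℕ) : Matrix (Slice n k) (Slice n k) ℝ :=
  downOp n (k + 1) * upOp n k

/-- `S ∈ H_{n,k}`: `S ⊆ {1,…,n}`, `|S| ≤ k`, and the `j`-th smallest element
(1-indexed) is at least `2j`. -/
def IsH (n k : ℕ) (S : Finset ℕ) : Prop :=
  S ⊆ Finset.Icc 1 n ∧ S.card ≤ k ∧
    ∀ j, j < S.card → 2 * (j + 1) ≤ (S.sort (· ≤ ·)).getD j 0

lemma wcast_false {n : ℕ} (x : Fin (n + 1) → Bool) (h : ¬ x (Fin.last n) = true) :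
    (Finset.univ.filter fun i : Fin n => x (Fin.castSucc i) = true).card
      = (Finset.univ.filter fun i : Fin (n + 1) => x i = true).card := by
  rw [Finset.card_filter, Finset.card_filter, Fin.sum_univ_castSucc]
  simp [h]

lemma wcast_true {n : ℕ} (x : Fin (n + 1) → Bool) (h : x (Fin.last n) = true) :
    (Finset.univ.filter fun i : Fin n => x (Fin.castSucc i) = true).card + 1
      = (Finset.univ.filter fun i : Fin (n + 1) => x i = true).card := by
  rw [Finset.card_filter, Finset.card_filter, Fin.sum_univ_castSucc]
  simp [h]

/-- Forgetting the last coordinate of `x` when it equals `0`. -/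
def dropLast {n m : ℕ} (x : Slice (n + 1) m) (h : ¬ x.1 (Fin.last n) = true) : Slice n m :=
  ⟨fun i => x.1 (Fin.castSucc i), by
    show (Finset.univ.filter fun i : Fin n => x.1 (Fin.castSucc i) = true).card = m
    rw [wcast_false x.1 h]; exact x.2⟩

/-- Forgetting the last coordinate of `x` when it equals `1`. -/
def dropLastT {n m : ℕ} (x : Slice (n + 1) m) (h : x.1 (Fin.last n) = true) : Slice n (m - 1) :=
  ⟨fun i => x.1 (Fin.castSucc i), by
    show (Finset.univ.filter fun i : Fin n => x.1 (Fin.castSucc i) = true).card = m - 1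
    have h1 := wcast_true x.1 h
    have h2 := x.2
    omega⟩

/-- The vector `χ_{n,S}` on the slice `C([n],|S|)`, defined recursively. -/
noncomputable def chi : (n : ℕ) → (S : Finset ℕ) → Slice n S.card → ℝ
  | 0, _ => fun _ => 1
  | n + 1, S =>
    if hS : n + 1 ∈ S then
      fun x =>
        if hx : x.1 (Fin.last n) = true then
          chi n (S.erase (n + 1)) ⟨(dropLastT x hx).1, by
            show (Finset.univ.filter fun i : Fin n => x.1 (Fin.castSucc i) = true).card
              = (S.erase (n + 1)).card
            rw [Finset.card_erase_of_mem hS]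
            exact (dropLastT x hx).2⟩
        else
          -(∑ y : Slice n (S.erase (n + 1)).card,
              (if ∀ i, y.1 i = true → (dropLast x hx).1 i = true then (1 : ℝ) else 0) *
                chi n (S.erase (n + 1)) y) / ((n : ℝ) + 1 - 2 * S.card + 1)
    else
      fun x =>
        if hx : x.1 (Fin.last n) = true then 0
        else chi n S (dropLast x hx)

/-- The basis vector `P↑_{n,|S|,k} χ_{n,S}` of `R^{C([n],k)}`. -/
noncomputable def basisVec (n k : ℕ) (S : Finset ℕ) : Slice n k → ℝ :=
  (upPath n S.card k).mulVec (chi n S)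

/-- The Fourier coefficient `f̂(S)`, equal to `0` when `S ∉ H_{n,min{k,n-k}}`. -/
noncomputable def fourierSlice (n k : ℕ) (f : Slice n k → ℝ) (S : Finset ℕ) : ℝ :=
  if IsH n (min k (n - k)) S then
    (∑ x, f x * basisVec n k S x) / Real.sqrt (∑ x, basisVec n k S x ^ 2)
  else 0

/-- The Hamming weight of `z ∈ {0,1}^t`. -/
def wt {t : ℕ} (z : Fin t → Bool) : ℕ :=
  (Finset.univ.filter fun i => z i = true).card

/-- The concatenation `x ∘ z ∈ {0,1}^n` of `x ∈ {0,1}^{n-t}` with `z ∈ {0,1}^t`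
(with `z` occupying the last `t` coordinates). -/
def catFun (n t : ℕ) (x : Fin (n - t) → Bool) (z : Fin t → Bool) : Fin n → Bool :=
  fun i =>
    if h : (i : ℕ) < n - t then x ⟨i, h⟩
    else if h2 : (i : ℕ) - (n - t) < t then z ⟨(i : ℕ) - (n - t), h2⟩
    else false

/-- The restriction `f_z : C([n-t], k-|z|) → ℝ`, `f_z(x) = f(x ∘ z)`; it is
(the everywhere-zero function on) the empty function when `|z| > k`. -/
noncomputable def restrict (n k t : ℕ) (f : Slice n k → ℝ) (z : Fin t → Bool) :
    Slice (n - t) (k - wt z) → ℝ :=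
  fun x =>
    if h : (Finset.univ.filter fun i => catFun n t x.1 z i = true).card = k then
      f ⟨catFun n t x.1 z, h⟩
    else 0

/-- The Fourier coefficient `f̂_z(S)` of the restriction `f_z`. -/
noncomputable def fourierSliceRestrict (n k t : ℕ) (f : Slice n k → ℝ) (z : Fin t → Bool)
    (S : Finset ℕ) : ℝ :=
  fourierSlice (n - t) (k - wt z) (restrict n k t f z) S

/-- The adjacency matrix `A_{n,k}` of the Johnson graph. -/
noncomputable def johnsonAdj (n k : ℕ) : Matrix (Slice n k) (Slice n k) ℝ :=
  Matrix.of fun x y =>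
    if (Finset.univ.filter fun i => x.1 i ≠ y.1 i).card = 2 then (1 : ℝ) else 0

/-! ### Raising and lowering operators on functions on the cube -/

/-- `x` covers `y` in the Boolean lattice: `y ≤ x` and `x` has one more `1` than `y`. -/
def Covers {n : ℕ} (x y : Fin n → Bool) : Prop :=
  (∀ i, y i = true → x i = true) ∧ wt y + 1 = wt x

/-- The up operator on functions on the whole cube `{0,1}^n`. -/
noncomputable def cubeUp {n : ℕ} (f : (Fin n → Bool) → ℝ) (x : Fin n → Bool) : ℝ :=
  ∑ y, if Covers x y then f y else 0

/-- The down operator on functions on the whole cube `{0,1}^n`, adjoint to `cubeUp`. -/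
noncomputable def cubeDown {n : ℕ} (f : (Fin n → Bool) → ℝ) (x : Fin n → Bool) : ℝ :=
  ∑ y, if Covers y x then f y else 0

/-- The extension by zero of a function on a slice to the whole cube. Working with extensions
keeps the weight out of the types. -/
noncomputable def extZero {n m : ℕ} (v : Slice n m → ℝ) (x : Fin n → Bool) : ℝ :=
  if h : wt x = m then v ⟨x, h⟩ else 0

/-- Append a last coordinate. -/
abbrev app {n : ℕ} (x : Fin n → Bool) (b : Bool) : Fin (n + 1) → Bool :=
  Fin.snoc (α := fun _ => Bool) x b

lemma sum_app {n : ℕ} (F : (Fin (n + 1) → Bool) → ℝ) :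
    ∑ x, F x = ∑ x : Fin n → Bool, F (app x false) + ∑ x : Fin n → Bool, F (app x true) := by
  rw [← (Fin.snocEquiv (fun _ : Fin (n + 1) => Bool)).sum_comp, Fintype.sum_prod_type]
  rw [Fintype.sum_bool, add_comm]
  rfl

lemma exists_app {n : ℕ} (x : Fin (n + 1) → Bool) : ∃ y b, x = app y b :=
  ⟨fun i => x i.castSucc, x (Fin.last n), (Fin.snoc_init_self x).symm⟩

lemma wt_app {n : ℕ} (x : Fin n → Bool) (b : Bool) :
    wt (app x b) = wt x + if b = true then 1 else 0 := by
  unfold wt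
  rw [Finset.card_filter, Finset.card_filter, Fin.sum_univ_castSucc]
  simp [app]

lemma eq_of_le_of_wt {n : ℕ} {x y : Fin n → Bool} (h : ∀ i, y i = true → x i = true)
    (hw : wt y = wt x) : x = y := by
  have hsub : (Finset.univ.filter fun i => y i = true) ⊆
      (Finset.univ.filter fun i => x i = true) := by
    intro i
    simpa using h i
  have := Finset.eq_of_subset_of_card_le hsub (le_of_eq hw.symm)
  funext i
  have hi := congrArg (i ∈ ·) this
  simp only [Finset.mem_filter, Finset.mem_univ, true_and, eq_iff_iff] at hi
  exact (Bool.eq_iff_iff.mpr hi).symm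

lemma le_app {n : ℕ} (x y : Fin n → Bool) (b c : Bool) :
    (∀ i, app y c i = true → app x b i = true) ↔
      (∀ i, y i = true → x i = true) ∧ (c = true → b = true) := by
  rw [Fin.forall_fin_succ']
  simp [app]

lemma covers_app_same {n : ℕ} (x y : Fin n → Bool) (b : Bool) :
    Covers (app x b) (app y b) ↔ Covers x y := by
  unfold Covers
  rw [le_app, wt_app, wt_app]
  constructor <;> rintro ⟨h, h'⟩
  · exact ⟨h.1, by omega⟩
  · exact ⟨⟨h, id⟩, by omega⟩

lemma covers_app_ft {n : ℕ} (x y : Fin n → Bool) :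
    ¬ Covers (app x false) (app y true) := by
  unfold Covers
  rw [le_app]
  simp

lemma covers_app_tf {n : ℕ} (x y : Fin n → Bool) :
    Covers (app x true) (app y false) ↔ x = y := by
  unfold Covers
  rw [le_app, wt_app, wt_app]
  constructor
  · rintro ⟨h, h'⟩
    exact eq_of_le_of_wt h.1 (by simpa using h')
  · rintro rfl
    simp

lemma cubeUp_false {n : ℕ} (f : (Fin (n + 1) → Bool) → ℝ) (x : Fin n → Bool) :
    cubeUp f (app x false) = cubeUp (fun y => f (app y false)) x := by
  rw [cubeUp, sum_app]
  simp [covers_app_same, covers_app_ft, cubeUp]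

lemma cubeUp_true {n : ℕ} (f : (Fin (n + 1) → Bool) → ℝ) (x : Fin n → Bool) :
    cubeUp f (app x true) = f (app x false) + cubeUp (fun y => f (app y true)) x := by
  rw [cubeUp, sum_app]
  simp [covers_app_same, covers_app_tf, cubeUp]

lemma cubeDown_false {n : ℕ} (f : (Fin (n + 1) → Bool) → ℝ) (x : Fin n → Bool) :
    cubeDown f (app x false) = cubeDown (fun y => f (app y false)) x + f (app x true) := by
  rw [cubeDown, sum_app]
  simp [covers_app_same, covers_app_tf, cubeDown]

lemma cubeDown_true {n : ℕ} (f : (Fin (n + 1) → Bool) → ℝ) (x : Fin n → Bool) :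
    cubeDown f (app x true) = cubeDown (fun y => f (app y true)) x := by
  rw [cubeDown, sum_app]
  simp [covers_app_same, covers_app_ft, cubeDown]

lemma cubeUp_add {n : ℕ} (f g : (Fin n → Bool) → ℝ) (x : Fin n → Bool) :
    cubeUp (fun y => f y + g y) x = cubeUp f x + cubeUp g x := by
  simp only [cubeUp, ← Finset.sum_add_distrib]
  refine Finset.sum_congr rfl fun y _ => ?_
  split_ifs <;> simp

lemma cubeDown_add {n : ℕ} (f g : (Fin n → Bool) → ℝ) (x : Fin n → Bool) :
    cubeDown (fun y => f y + g y) x = cubeDown f x + cubeDown g x := by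
  simp only [cubeDown, ← Finset.sum_add_distrib]
  refine Finset.sum_congr rfl fun y _ => ?_
  split_ifs <;> simp

lemma cubeUp_mul {n : ℕ} (c : ℝ) (f : (Fin n → Bool) → ℝ) (x : Fin n → Bool) :
    cubeUp (fun y => c * f y) x = c * cubeUp f x := by
  simp [cubeUp, Finset.mul_sum]

lemma cubeDown_mul {n : ℕ} (c : ℝ) (f : (Fin n → Bool) → ℝ) (x : Fin n → Bool) :
    cubeDown (fun y => c * f y) x = c * cubeDown f x := by
  simp [cubeDown, Finset.mul_sum]

lemma cubeDown_zero {n : ℕ} (x : Fin n → Bool) : cubeDown (fun _ => 0) x = 0 := by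
  simp [cubeDown]

/-- `cubeUp` and `cubeDown` are adjoint. -/
lemma sum_cubeUp_mul {n : ℕ} (f g : (Fin n → Bool) → ℝ) :
    ∑ x, cubeUp f x * g x = ∑ x, f x * cubeDown g x := by
  simp only [cubeUp, cubeDown, Finset.sum_mul, Finset.mul_sum]
  rw [Finset.sum_comm]
  refine Finset.sum_congr rfl fun y _ => Finset.sum_congr rfl fun x _ => ?_
  split_ifs <;> simp

/-- The `sl₂` commutation relation. In block form with respect to the last coordinate it reduces
to the same relation in one dimension less. -/
lemma cubeDown_cubeUp : ∀ {n : ℕ} (f : (Fin n → Bool) → ℝ) (x : Fin n → Bool),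
    cubeDown (cubeUp f) x = cubeUp (cubeDown f) x + ((n : ℝ) - 2 * wt x) * f x
  | 0, f, x => by simp [cubeDown, cubeUp, Covers, wt]
  | n + 1, f, x => by
    obtain ⟨y, b, rfl⟩ := exists_app x
    cases b
    · rw [cubeDown_false, cubeUp_false, cubeUp_true, wt_app]
      simp only [cubeUp_false, cubeDown_false]
      rw [cubeUp_add]
      rw [show (fun y => cubeUp (fun z => f (app z false)) y) = cubeUp (fun z => f (app z false)) from rfl,
        cubeDown_cubeUp]
      simp
      ring
    · rw [cubeDown_true, cubeUp_true, wt_app]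
      simp only [cubeUp_true, cubeDown_true, cubeDown_false]
      rw [cubeDown_add, cubeDown_cubeUp]
      simp
      ring

/-! ### Norms of raised harmonic functions -/

lemma cubeUp_supp {n m : ℕ} {f : (Fin n → Bool) → ℝ} (hf : ∀ x, wt x ≠ m → f x = 0) :
    ∀ x, wt x ≠ m + 1 → cubeUp f x = 0 := by
  intro x hx
  refine Finset.sum_eq_zero fun y _ => ?_
  split_ifs with h
  · exact hf y fun hy => hx (by rw [← h.2, hy])
  · rfl

lemma cubeUp_iter_supp {n m : ℕ} {f : (Fin n → Bool) → ℝ} (hf : ∀ x, wt x ≠ m → f x = 0) :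
    ∀ d x, wt x ≠ m + d → (cubeUp^[d]) f x = 0
  | 0 => hf
  | d + 1 => by
    rw [Function.iterate_succ_apply']
    exact cubeUp_supp (cubeUp_iter_supp hf d)

/-- On a harmonic function of weight `m`, lowering undoes one raising up to a scalar, obtained by
moving `D` through `U^(d+1)` with the commutation relation. -/
lemma cubeDown_iter {n m : ℕ} {f : (Fin n → Bool) → ℝ} (hf : ∀ x, wt x ≠ m → f x = 0)
    (hD : ∀ x, cubeDown f x = 0) : ∀ d x, cubeDown ((cubeUp^[d + 1]) f) x =
      ((d + 1) * ((n : ℝ) - 2 * m - d)) * (cubeUp^[d]) f x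
  | d, x => by
    have hw : ((n : ℝ) - 2 * wt x) * (cubeUp^[d]) f x =
        ((n : ℝ) - 2 * (m + d)) * (cubeUp^[d]) f x := by
      by_cases h : wt x = m + d
      · rw [h]; push_cast; ring
      · rw [cubeUp_iter_supp hf d x h]; ring
    rw [Function.iterate_succ_apply', cubeDown_cubeUp, hw]
    cases d with
    | zero =>
      have : cubeDown f = fun _ => 0 := funext hD
      simp [this, cubeUp]
    | succ d =>
      have : cubeDown ((cubeUp^[d + 1]) f) = fun x =>
          ((d + 1) * ((n : ℝ) - 2 * m - d)) * (cubeUp^[d]) f x :=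
        funext (cubeDown_iter hf hD d)
      rw [this, cubeUp_mul, ← Function.iterate_succ_apply' cubeUp]
      push_cast
      ring

lemma norm_iter {n m : ℕ} {f : (Fin n → Bool) → ℝ} (hf : ∀ x, wt x ≠ m → f x = 0)
    (hD : ∀ x, cubeDown f x = 0) (d : ℕ) :
    ∑ x, (cubeUp^[d + 1]) f x ^ 2 =
      ((d + 1) * ((n : ℝ) - 2 * m - d)) * ∑ x, (cubeUp^[d]) f x ^ 2 := by
  have h1 : ∀ x, (cubeUp^[d + 1]) f x ^ 2 =
      cubeUp ((cubeUp^[d]) f) x * (cubeUp^[d + 1]) f x := by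
    intro x
    rw [pow_two]
    nth_rw 1 [Function.iterate_succ_apply']
  rw [Finset.sum_congr rfl fun x _ => h1 x, sum_cubeUp_mul, Finset.mul_sum]
  refine Finset.sum_congr rfl fun x _ => ?_
  rw [cubeDown_iter hf hD]
  ring

lemma norm_iter_factorial {n m : ℕ} {f : (Fin n → Bool) → ℝ} (hf : ∀ x, wt x ≠ m → f x = 0)
    (hD : ∀ x, cubeDown f x = 0) : ∀ d, 2 * m + d ≤ n →
    ∑ x, (cubeUp^[d]) f x ^ 2 = (((n - 2 * m).factorial : ℝ) * (d.factorial : ℝ) /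
      ((n - 2 * m - d).factorial : ℝ)) * ∑ x, f x ^ 2
  | 0, _ => by
    have : ((n - 2 * m).factorial : ℝ) ≠ 0 := by positivity
    simp [this]
  | d + 1, h => by
    rw [norm_iter hf hD, norm_iter_factorial hf hD d (by omega)]
    obtain ⟨r, rfl⟩ : ∃ r, n = 2 * m + (d + 1) + r := ⟨n - (2 * m + (d + 1)), by omega⟩
    have e1 : 2 * m + (d + 1) + r - 2 * m - d = r + 1 := by omega
    have e2 : 2 * m + (d + 1) + r - 2 * m - (d + 1) = r := by omega
    rw [e1, e2, Nat.factorial_succ r, Nat.factorial_succ d]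
    have : (r.factorial : ℝ) ≠ 0 := by positivity
    have : (r : ℝ) + 1 ≠ 0 := by positivity
    push_cast
    field_simp
    ring

/-! ### Extension by zero of the slice operators -/

lemma extZero_of_ne {n m : ℕ} (v : Slice n m → ℝ) (x : Fin n → Bool) (h : wt x ≠ m) :
    extZero v x = 0 := dif_neg h

lemma sum_extZero {n m : ℕ} (G : (Fin n → Bool) → ℝ) (v : Slice n m → ℝ) :
    ∑ x, G x * extZero v x = ∑ y : Slice n m, G y.1 * v y := by
  have h1 : ∑ x, G x * extZero v x =
      ∑ x ∈ Finset.univ.filter (fun x : Fin n → Bool => wt x = m), G x * extZero v x := by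
    rw [Finset.sum_filter]
    refine Finset.sum_congr rfl fun x _ => ?_
    split_ifs with h
    · rfl
    · rw [extZero_of_ne v x h, mul_zero]
  rw [h1, Finset.sum_subtype (p := fun x : Fin n → Bool => wt x = m) _ (by simp)]
  refine Finset.sum_congr rfl fun y _ => ?_
  rw [extZero, dif_pos y.2]
  rfl

/-- On the slice just above that of `v`, the weight condition in `Covers` is automatic, which
recovers the sum used in the definitions of `upOp` and `chi`. -/
lemma cubeUp_extZero {n m : ℕ} (v : Slice n m → ℝ) (x : Fin n → Bool) (hx : wt x = m + 1) :
    cubeUp (extZero v) x =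
      ∑ y : Slice n m, (if ∀ i, y.1 i = true → x i = true then (1 : ℝ) else 0) * v y := by
  rw [← sum_extZero (fun y => if ∀ i, y i = true → x i = true then (1 : ℝ) else 0)]
  refine Finset.sum_congr rfl fun y _ => ?_
  by_cases hy : wt y = m
  · simp [Covers, hy, hx]
  · simp [extZero_of_ne v y hy]

lemma extZero_upOp {n m : ℕ} (v : Slice n m → ℝ) :
    extZero ((upOp n m).mulVec v) = cubeUp (extZero v) := by
  funext x
  by_cases hx : wt x = m + 1
  · rw [cubeUp_extZero v x hx]
    unfold extZero
    rw [dif_pos hx]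
    rfl
  · rw [extZero_of_ne _ _ hx, cubeUp_supp (fun x => extZero_of_ne v x) x hx]

lemma extZero_upPathAux {n i : ℕ} (v : Slice n i → ℝ) : ∀ d,
    extZero ((upPathAux n i d).mulVec v) = (cubeUp^[d]) (extZero v)
  | 0 => by
    change extZero ((1 : Matrix (Slice n i) (Slice n i) ℝ).mulVec v) = _
    rw [Matrix.one_mulVec]
    rfl
  | d + 1 => by
    rw [Function.iterate_succ_apply', ← extZero_upPathAux v d, ← extZero_upOp, Matrix.mulVec_mulVec]
    rfl

/-- The transport `cast` in `upPath` is along `i + (k - i) = k`; it disappears once `k` has the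
form `i + d`. -/
lemma extZero_upPath {n i : ℕ} (v : Slice n i → ℝ) (d : ℕ) :
    extZero ((upPath n i (i + d)).mulVec v) = (cubeUp^[d]) (extZero v) := by
  rw [← extZero_upPathAux]
  have key : ∀ e (he : e = d) (hc : Matrix (Slice n (i + e)) (Slice n i) ℝ =
      Matrix (Slice n (i + d)) (Slice n i) ℝ), cast hc (upPathAux n i e) = upPathAux n i d := by
    rintro e rfl hc
    rfl
  unfold upPath
  rw [dif_pos (Nat.le_add_right i d)]
  congr 2
  have hd : i + d - i = d := by omega
  generalize_proofs h1
  exact key _ hd _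

lemma norm_extZero {n m : ℕ} (v : Slice n m → ℝ) :
    ∑ x, extZero v x ^ 2 = ∑ y, v y ^ 2 := by
  simp only [pow_two]
  rw [sum_extZero]
  refine Finset.sum_congr rfl fun y _ => ?_
  rw [extZero, dif_pos (show wt y.1 = m from y.2)]

/-! ### The basis functions `χ` -/

/-- `χ_{n,S}` extended by zero to the whole cube. -/
noncomputable def chiExt (n : ℕ) (S : Finset ℕ) : (Fin n → Bool) → ℝ := extZero (chi n S)

lemma chiExt_not_mem_true {n : ℕ} {S : Finset ℕ} (hS : n + 1 ∉ S) (x : Fin n → Bool) :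
    chiExt (n + 1) S (app x true) = 0 := by
  unfold chiExt extZero
  split_ifs with h
  · rw [chi, dif_neg hS, dif_pos (by simp [app])]
  · rfl

lemma chiExt_not_mem_false {n : ℕ} {S : Finset ℕ} (hS : n + 1 ∉ S) (x : Fin n → Bool) :
    chiExt (n + 1) S (app x false) = chiExt n S x := by
  have hw := wt_app x false
  by_cases h : wt x = S.card
  · have h' : wt (app x false) = S.card := by simpa [h] using hw
    unfold chiExt extZero
    rw [dif_pos h, dif_pos h', chi, dif_neg hS, dif_neg (by simp [app])]
    congr 1
    simp [dropLast, app]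
  · have h' : wt (app x false) ≠ S.card := by simpa [hw] using h
    rw [chiExt, chiExt, extZero_of_ne _ _ h, extZero_of_ne _ _ h']

lemma chiExt_mem_true {n : ℕ} {S : Finset ℕ} (hS : n + 1 ∈ S) (x : Fin n → Bool) :
    chiExt (n + 1) S (app x true) = chiExt n (S.erase (n + 1)) x := by
  have hw := wt_app x true
  have hc := Finset.card_erase_add_one hS
  by_cases h : wt x = (S.erase (n + 1)).card
  · have h' : wt (app x true) = S.card := by simp [hw]; omega
    unfold chiExt extZero
    rw [dif_pos h, dif_pos h', chi, dif_pos hS]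
    dsimp only
    rw [dif_pos (by simp [app])]
    congr 1
    simp [dropLastT, app]
  · have h' : wt (app x true) ≠ S.card := by simp [hw]; omega
    rw [chiExt, chiExt, extZero_of_ne _ _ h, extZero_of_ne _ _ h']

/-- The denominator `(n + 1) - 2 |S| + 1` of the recursion, written with `|S| - 1` in place of
`|S|`. -/
lemma chiExt_mem_false {n : ℕ} {S : Finset ℕ} (hS : n + 1 ∈ S) (x : Fin n → Bool) :
    chiExt (n + 1) S (app x false) =
      (-1 / ((n : ℝ) - 2 * (S.erase (n + 1)).card)) * cubeUp (chiExt n (S.erase (n + 1))) x := by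
  have hw := wt_app x false
  have hc := Finset.card_erase_add_one hS
  by_cases h : wt x = (S.erase (n + 1)).card + 1
  · have h' : wt (app x false) = S.card := by simp [hw]; omega
    rw [chiExt, chiExt, cubeUp_extZero _ _ h]
    unfold extZero
    rw [dif_pos h', chi, dif_pos hS]
    dsimp only
    rw [dif_neg (by simp [app])]
    have e : (n : ℝ) + 1 - 2 * S.card + 1 = (n : ℝ) - 2 * (S.erase (n + 1)).card := by
      rw [← hc]; push_cast; ring
    rw [e, div_mul_eq_mul_div, neg_one_mul]
    congr 3
    simp [dropLast, app]
  · have h' : wt (app x false) ≠ S.card := by simp [hw]; omega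
    rw [chiExt, chiExt, extZero_of_ne _ _ h', cubeUp_supp (fun x => extZero_of_ne _ x) x h,
      mul_zero]

lemma sort_eq_append {n : ℕ} {S : Finset ℕ} (hS : S ⊆ Finset.Icc 1 (n + 1)) (h : n + 1 ∈ S) :
    S.sort (· ≤ ·) = (S.erase (n + 1)).sort (· ≤ ·) ++ [n + 1] := by
  have hn : ((S.erase (n + 1)).sort (· ≤ ·) ++ [n + 1]).Nodup := by
    rw [List.nodup_append]
    refine ⟨Finset.sort_nodup _ _, by simp, ?_⟩
    intro a ha b hb
    simp at ha hb
    omega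
  have hs : ((S.erase (n + 1)).sort (· ≤ ·) ++ [n + 1]).Pairwise (· ≤ ·) := by
    rw [List.pairwise_append]
    refine ⟨Finset.pairwise_sort _ _, by simp, ?_⟩
    intro a ha b hb
    simp at ha hb
    have := Finset.mem_Icc.mp (hS ha.2)
    omega
  have ht : ((S.erase (n + 1)).sort (· ≤ ·) ++ [n + 1]).toFinset = S := by
    ext a
    simp
    by_cases ha : a = n + 1
    · simp [ha, h]
    · simp [ha]
  rw [← (List.toFinset_sort (· ≤ ·) hn).mpr hs, ht]

/-- `χ_{n,S}` is harmonic, and its squared norm is the product in the statement. The two claims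
are proved together because the norm of `χ_{n,S}` in the inductive step uses harmonicity of
`χ_{n-1,S∖{n}}`. -/
lemma chiExt_spec : ∀ (n : ℕ) (S : Finset ℕ), S ⊆ Finset.Icc 1 n →
    (∀ j, j < S.card → 2 * (j + 1) ≤ (S.sort (· ≤ ·)).getD j 0) →
    (∀ x, cubeDown (chiExt n S) x = 0) ∧
    ∑ x, chiExt n S x ^ 2 = ∏ j ∈ Finset.range S.card,
            ((((S.sort (· ≤ ·)).getD j 0 : ℝ) - 2 * (j + 1) + 2) /
              (((S.sort (· ≤ ·)).getD j 0 : ℝ) - 2 * (j + 1) + 1))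
  | 0, S, hS, _ => by
    have : S = ∅ := by simpa using hS
    subst this
    refine ⟨fun x => by simp [cubeDown, Covers, wt], ?_⟩
    simp [chiExt, extZero, chi, wt]
  | n + 1, S, hS, hj => by
    by_cases h : n + 1 ∈ S
    · have hc := Finset.card_erase_add_one h
      have hsort := sort_eq_append hS h
      have hlen : ((S.erase (n + 1)).sort (· ≤ ·)).length = (S.erase (n + 1)).card :=
        Finset.length_sort _
      have hlt : ∀ j, j < (S.erase (n + 1)).card →
          (S.sort (· ≤ ·)).getD j 0 = ((S.erase (n + 1)).sort (· ≤ ·)).getD j 0 := by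
        intro j hj
        rw [hsort, List.getD_append _ _ _ _ (by omega)]
      have hlast : (S.sort (· ≤ ·)).getD (S.erase (n + 1)).card 0 = n + 1 := by
        rw [hsort, List.getD_append_right _ _ _ _ (by omega), hlen]
        simp
      have hsub : S.erase (n + 1) ⊆ Finset.Icc 1 n := by
        intro a ha
        have h1 := Finset.mem_erase.mp ha
        have h2 := Finset.mem_Icc.mp (hS h1.2)
        rw [Finset.mem_Icc]
        omega
      -- `n + 1` is the `|S|`-th smallest element, so `2 |S| ≤ n + 1`: the denominator `n - 2 m`
      -- in the recursion (with `m = |S| - 1`) is positive.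
      have hpos := hj (S.erase (n + 1)).card (by omega)
      rw [hlast] at hpos
      obtain ⟨ihD, ihN⟩ := chiExt_spec n (S.erase (n + 1)) hsub (by
        intro j hj'
        rw [← hlt j hj']
        exact hj j (by omega))
      set m := (S.erase (n + 1)).card with hm
      set g := chiExt n (S.erase (n + 1)) with hg
      have hsupp : ∀ x, wt x ≠ m → g x = 0 := fun x => extZero_of_ne _ x
      have hq : (0 : ℝ) < (n : ℝ) - 2 * m := by
        have : 2 * m + 1 ≤ n := by omega
        have : (2 * m + 1 : ℝ) ≤ n := by exact_mod_cast this
        linarith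
      have hT : (fun y => chiExt (n + 1) S (app y true)) = g := funext (chiExt_mem_true h)
      have hF : (fun y => chiExt (n + 1) S (app y false)) =
          fun y => (-1 / ((n : ℝ) - 2 * m)) * cubeUp g y := funext (chiExt_mem_false h)
      constructor
      · intro x
        obtain ⟨y, b, rfl⟩ := exists_app x
        cases b
        · rw [cubeDown_false, hF, cubeDown_mul, chiExt_mem_true h]
          have := cubeDown_iter hsupp ihD 0 y
          simp only [zero_add, Function.iterate_one, Function.iterate_zero, id] at this
          rw [this]
          push_cast
          field_simp
          ring
        · rw [cubeDown_true, hT]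
          exact ihD y
      · have hN := norm_iter hsupp ihD 0
        simp only [zero_add, Function.iterate_one, Function.iterate_zero, id] at hN
        rw [sum_app, ← hc, Finset.prod_range_succ, hlast]
        rw [Finset.prod_congr rfl fun j hj => by rw [hlt j (Finset.mem_range.mp hj)], ← ihN]
        simp only [chiExt_mem_true h, chiExt_mem_false h, mul_pow, ← hm, ← hg]
        rw [← Finset.mul_sum, hN]
        have e1 : ((n + 1 : ℕ) : ℝ) - 2 * (m + 1) + 1 = n - 2 * m := by push_cast; ring
        have e2 : ((n + 1 : ℕ) : ℝ) - 2 * (m + 1) + 2 = n - 2 * m + 1 := by push_cast; ring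
        rw [e1, e2]
        push_cast
        field_simp
        ring
    · have hsub : S ⊆ Finset.Icc 1 n := by
        intro a ha
        have h2 := Finset.mem_Icc.mp (hS ha)
        have : a ≠ n + 1 := fun e => h (e ▸ ha)
        rw [Finset.mem_Icc]
        omega
      obtain ⟨ihD, ihN⟩ := chiExt_spec n S hsub hj
      have hT : (fun y => chiExt (n + 1) S (app y true)) = fun _ => 0 :=
        funext (chiExt_not_mem_true h)
      have hF : (fun y => chiExt (n + 1) S (app y false)) = chiExt n S :=
        funext (chiExt_not_mem_false h)
      constructor
      · intro x
        obtain ⟨y, b, rfl⟩ := exists_app x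
        cases b
        · rw [cubeDown_false, hF, ihD, chiExt_not_mem_true h, add_zero]
        · rw [cubeDown_true, hT, cubeDown_zero]
      · rw [sum_app, ← ihN]
        simp [chiExt_not_mem_true h, chiExt_not_mem_false h]

/-- For `S ∈ H_{n,min{k,n-k}}` with `|S| ≤ k ≤ n - |S|`,
`‖P↑_{n,|S|,k} χ_{n,S}‖₂² = [(n-2|S|)!(k-|S|)!/(n-k-|S|)!] ∏_{i=1}^{|S|} (s_i-2i+2)/(s_i-2i+1)`. -/
theorem stmt11 (n k : ℕ) (S : Finset ℕ) (hS : IsH n (min k (n - k)) S)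
    (h1 : S.card ≤ k) (h2 : k ≤ n - S.card) :
    ∑ x, (basisVec n k S x) ^ 2
      = (((n - 2 * S.card).factorial : ℝ) * ((k - S.card).factorial : ℝ)
            / ((n - k - S.card).factorial : ℝ)) *
          ∏ j ∈ Finset.range S.card,
            ((((S.sort (· ≤ ·)).getD j 0 : ℝ) - 2 * (j + 1) + 2) /
              (((S.sort (· ≤ ·)).getD j 0 : ℝ) - 2 * (j + 1) + 1)) := by
  obtain ⟨hsub, hcard, hj⟩ := hS
  obtain ⟨hD, hN⟩ := chiExt_spec n S hsub hj
  obtain ⟨d, rfl⟩ := Nat.exists_eq_add_of_le h1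
  have hle : 2 * S.card + d ≤ n := by
    have := le_min_iff.mp hcard
    omega
  have e1 : S.card + d - S.card = d := by omega
  have e2 : n - (S.card + d) - S.card = n - 2 * S.card - d := by omega
  rw [e1, e2, ← hN, ← norm_iter_factorial (m := S.card) (f := chiExt n S) (fun x => extZero_of_ne _ x) hD d hle,
    ← norm_extZero]
  unfold basisVec chiExt
  rw [extZero_upPath]
end

section
/- Let f : C([n],k) → R, let f₀ and f₁ denote its restrictions by fixing the last coordinate to 0 and 1 respectively, and let S ∈ H_{n−1, min{k,n−k}} with |S| < min{k, n−k}. Then f̂₀(S) = (1/√(n − 2|S|)) · (√(n − k − |S|) · f̂(S) − √(k − |S|) · f̂(S ∪ {n})) and f̂₁(S) = (1/√(n − 2|S|)) · (√(n − k − |S|) · f̂(S ∪ {n}) + √(k − |S|) · f̂(S)). -/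
/-!
Write `n = m + 1`, `s = |S|`, `T = S ∪ {n}`, and let `B_{m,k} = P↑_{m,s,k} χ_{m,S}`. Splitting
`{0,1}^n` by its last coordinate, the two basis vectors of the larger slice are built from
`B_{m,k}` and `B_{m,k-1}`:
* `P↑_{n,s,k} χ_{n,S}` restricts to `B_{m,k}` and `(k - s) B_{m,k-1}`
  (`upL_pow_chiZ_not_mem`);
* `P↑_{n,s+1,k} χ_{n,T}` restricts to `-r⁻¹ B_{m,k}` and `(n - k - s) r⁻¹ B_{m,k-1}`, where
  `r = m - 2s` (`upL_pow_chiZ_insert`).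

So both coefficients of `f` are combinations of `⟨f₀, B_{m,k}⟩` and `⟨f₁, B_{m,k-1}⟩`, and what is
left is to compare the norms. The vector `χ_{m,S}` is harmonic, that is, annihilated by the down
operator (`downL_chiZ`), and the commutation relation `P↓P↑ - P↑P↓ = m - 2|x|` (`downL_upL`) then
gives `‖B_{m,k}‖² = (k - s)(n - k - s) ‖B_{m,k-1}‖²` (`sum_sq_upL_pow_succ`). With
`p = k - s` and `q = n - k - s` the claim becomes the identity `fourier_algebra`.

All vectors on slices are extended by zero to functions on the whole cube (`extZ`), on which a
single up operator `upL` acts; its powers replace the iterated operators between slices, and its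
behaviour under splitting off the last coordinate is a two-line recursion.
-/

open scoped Classical

/-! ### Splitting the cube by the last coordinate -/

/-- The point `x ∘ b` of the cube `{0,1}^{n+1}`: the bit `b` is appended to `x`. -/
def sn {n : ℕ} (x : Fin n → Bool) (b : Bool) : Fin (n + 1) → Bool :=
  Fin.snoc (α := fun _ => Bool) x b

@[simp] lemma sn_last {n : ℕ} (x : Fin n → Bool) (b : Bool) : sn x b (Fin.last n) = b := by
  simp [sn]

@[simp] lemma sn_castSucc {n : ℕ} (x : Fin n → Bool) (b : Bool) (i : Fin n) :
    sn x b (Fin.castSucc i) = x i := by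
  simp [sn]

lemma exists_sn {n : ℕ} (x : Fin (n + 1) → Bool) : ∃ y b, x = sn y b :=
  ⟨Fin.init x, x (Fin.last n), by simp [sn]⟩

lemma sum_sn {n : ℕ} (F : (Fin (n + 1) → Bool) → ℝ) :
    ∑ x, F x = ∑ x : Fin n → Bool, F (sn x false) + ∑ x : Fin n → Bool, F (sn x true) := by
  rw [← (Fin.snocEquiv (fun _ => Bool)).sum_comp, Fintype.sum_prod_type, Fintype.sum_bool, add_comm]
  rfl

lemma wt_sn_false {n : ℕ} (x : Fin n → Bool) : wt (sn x false) = wt x := by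
  have := wcast_false (sn x false) (by simp)
  simpa [wt] using this.symm

lemma wt_sn_true {n : ℕ} (x : Fin n → Bool) : wt (sn x true) = wt x + 1 := by
  have := wcast_true (sn x true) (by simp)
  simpa [wt] using this.symm

/-! ### The covering relation, up and down operators on the cube -/

/-- `x` covers `y` in the Boolean lattice: `y ≤ x`, and `x` has exactly one more `1`. -/
def Cov {n : ℕ} (y x : Fin n → Bool) : Prop :=
  (∀ i, y i = true → x i = true) ∧ wt y + 1 = wt x

lemma le_eq_of_wt {n : ℕ} {y x : Fin n → Bool} (h : ∀ i, y i = true → x i = true)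
    (hw : wt y = wt x) : y = x := by
  have hs : (Finset.univ.filter fun i => y i = true) ⊆ Finset.univ.filter fun i => x i = true := by
    intro i hi
    simpa using h i (by simpa using hi)
  have := Finset.eq_of_subset_of_card_le hs (le_of_eq hw.symm)
  funext i
  have h2 := Finset.ext_iff.1 this i
  simp only [Finset.mem_filter, Finset.mem_univ, true_and] at h2
  exact Bool.eq_iff_iff.2 h2

lemma cov_ff {n : ℕ} (y x : Fin n → Bool) : Cov (sn y false) (sn x false) ↔ Cov y x := by
  simp [Cov, Fin.forall_fin_succ', wt_sn_false]

lemma cov_tt {n : ℕ} (y x : Fin n → Bool) : Cov (sn y true) (sn x true) ↔ Cov y x := by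
  simp [Cov, Fin.forall_fin_succ', wt_sn_true]

lemma cov_tf {n : ℕ} (y x : Fin n → Bool) : ¬ Cov (sn y true) (sn x false) := by
  simp [Cov, Fin.forall_fin_succ']

lemma cov_ft {n : ℕ} (y x : Fin n → Bool) : Cov (sn y false) (sn x true) ↔ y = x := by
  simp only [Cov, Fin.forall_fin_succ', sn_castSucc, sn_last, wt_sn_true, wt_sn_false]
  constructor
  · rintro ⟨⟨h, -⟩, hw⟩
    exact le_eq_of_wt h (by omega)
  · rintro rfl
    simp

/-- The up operator on functions on the whole cube: `(upL n g) x` is the sum of `g` over the points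
covered by `x`. On functions supported on the `k`-th slice it is `P↑_{n,k}` (see `extZ_upOp`). -/
noncomputable def upL (n : ℕ) : Module.End ℝ ((Fin n → Bool) → ℝ) where
  toFun g x := ∑ y, if Cov y x then g y else 0
  map_add' g h := by
    funext x
    simp only [Pi.add_apply, ← Finset.sum_add_distrib]
    exact Finset.sum_congr rfl fun y _ => by split_ifs <;> simp
  map_smul' c g := by
    funext x
    simp only [Pi.smul_apply, smul_eq_mul, RingHom.id_apply, Finset.mul_sum]
    exact Finset.sum_congr rfl fun y _ => by split_ifs <;> simp

/-- The down operator on functions on the whole cube, the transpose of `upL`: `(downL n g) x` is the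
sum of `g` over the points covering `x`. -/
noncomputable def downL (n : ℕ) : Module.End ℝ ((Fin n → Bool) → ℝ) where
  toFun g x := ∑ y, if Cov x y then g y else 0
  map_add' g h := by
    funext x
    simp only [Pi.add_apply, ← Finset.sum_add_distrib]
    exact Finset.sum_congr rfl fun y _ => by split_ifs <;> simp
  map_smul' c g := by
    funext x
    simp only [Pi.smul_apply, smul_eq_mul, RingHom.id_apply, Finset.mul_sum]
    exact Finset.sum_congr rfl fun y _ => by split_ifs <;> simp

lemma upL_apply {n : ℕ} (g : (Fin n → Bool) → ℝ) (x : Fin n → Bool) :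
    upL n g x = ∑ y, if Cov y x then g y else 0 := rfl

lemma downL_apply {n : ℕ} (g : (Fin n → Bool) → ℝ) (x : Fin n → Bool) :
    downL n g x = ∑ y, if Cov x y then g y else 0 := rfl

lemma upL_false {n : ℕ} (g : (Fin (n + 1) → Bool) → ℝ) (x : Fin n → Bool) :
    upL (n + 1) g (sn x false) = upL n (fun y => g (sn y false)) x := by
  simp [upL_apply, sum_sn, cov_ff, cov_tf]

lemma upL_true {n : ℕ} (g : (Fin (n + 1) → Bool) → ℝ) (x : Fin n → Bool) :
    upL (n + 1) g (sn x true) = g (sn x false) + upL n (fun y => g (sn y true)) x := by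
  simp [upL_apply, sum_sn, cov_ft, cov_tt]

lemma downL_false {n : ℕ} (g : (Fin (n + 1) → Bool) → ℝ) (x : Fin n → Bool) :
    downL (n + 1) g (sn x false) = downL n (fun y => g (sn y false)) x + g (sn x true) := by
  simp [downL_apply, sum_sn, cov_ff, cov_ft]

lemma downL_true {n : ℕ} (g : (Fin (n + 1) → Bool) → ℝ) (x : Fin n → Bool) :
    downL (n + 1) g (sn x true) = downL n (fun y => g (sn y true)) x := by
  simp [downL_apply, sum_sn, cov_tf, cov_tt]

/-- `upL` and `downL` are adjoint for the standard inner product. -/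
lemma sum_upL_mul {n : ℕ} (g h : (Fin n → Bool) → ℝ) :
    ∑ x, upL n g x * h x = ∑ x, g x * downL n h x := by
  simp only [upL_apply, downL_apply, Finset.sum_mul, Finset.mul_sum]
  rw [Finset.sum_comm]
  exact Finset.sum_congr rfl fun x _ => Finset.sum_congr rfl fun y _ => by split_ifs <;> simp

/-- The commutation relation `P↓P↑ - P↑P↓ = n - 2|x|`, by induction on `n` through the block form
of the two operators with respect to the last coordinate. -/
lemma downL_upL {n : ℕ} (g : (Fin n → Bool) → ℝ) (x : Fin n → Bool) :
    downL n (upL n g) x = upL n (downL n g) x + ((n : ℝ) - 2 * wt x) * g x := by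
  induction n with
  | zero => simp [upL_apply, downL_apply, Cov, wt]
  | succ n ih =>
    obtain ⟨x, b, rfl⟩ := exists_sn x
    have d0 : (fun y => downL (n + 1) g (sn y false))
        = downL n (fun y => g (sn y false)) + fun y => g (sn y true) := by
      funext y; exact downL_false g y
    have d1 : (fun y => downL (n + 1) g (sn y true)) = downL n (fun y => g (sn y true)) := by
      funext y; exact downL_true g y
    have u0 : (fun y => upL (n + 1) g (sn y false)) = upL n (fun y => g (sn y false)) := by
      funext y; exact upL_false g y
    have u1 : (fun y => upL (n + 1) g (sn y true))
        = (fun y => g (sn y false)) + upL n (fun y => g (sn y true)) := by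
      funext y; exact upL_true g y
    cases b
    · rw [downL_false, upL_false, upL_true, u0, d0, map_add, Pi.add_apply, ih, wt_sn_false]
      push_cast; ring
    · rw [downL_true, upL_true, downL_false, u1, d1, map_add, Pi.add_apply, ih, wt_sn_true]
      push_cast; ring

/-! ### From slices to the cube -/

/-- Extension by zero of a function on the slice `C([n],k)` to the cube `{0,1}^n`. Working with the
extensions removes the dependence of the types on `k`. -/
noncomputable def extZ {n k : ℕ} (g : Slice n k → ℝ) (x : Fin n → Bool) : ℝ :=
  if h : (Finset.univ.filter fun i => x i = true).card = k then g ⟨x, h⟩ else 0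

lemma extZ_of_ne {n k : ℕ} (g : Slice n k → ℝ) {x : Fin n → Bool} (h : wt x ≠ k) :
    extZ g x = 0 := dif_neg h

lemma extZ_of_eq {n k : ℕ} (g : Slice n k → ℝ) {x : Fin n → Bool} (h : wt x = k) :
    extZ g x = g ⟨x, h⟩ := dif_pos h

lemma sum_extZ {n k : ℕ} (F : (Fin n → Bool) → ℝ) (hF : ∀ x, wt x ≠ k → F x = 0) :
    ∑ x : Slice n k, F x.1 = ∑ x, F x := by
  rw [← Finset.sum_subtype (Finset.univ.filter fun x : Fin n → Bool => wt x = k)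
    (fun x => by rw [Finset.mem_filter_univ]; rfl) F]
  exact Finset.sum_subset (Finset.subset_univ _) fun x _ hx => hF x (by simpa using hx)

lemma extZ_coe {n k : ℕ} (g : Slice n k → ℝ) (x : Slice n k) : extZ g x.1 = g x :=
  dif_pos x.2

lemma sum_slice_mul {n k : ℕ} (g h : Slice n k → ℝ) :
    ∑ x, g x * h x = ∑ x, extZ g x * extZ h x := by
  rw [← sum_extZ (k := k) (fun x => extZ g x * extZ h x) (fun x hx => by simp [extZ_of_ne g hx])]
  simp only [extZ_coe]

lemma extZ_upOp {n k : ℕ} (g : Slice n k → ℝ) :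
    extZ ((upOp n k).mulVec g) = upL n (extZ g) := by
  funext x
  rw [upL_apply, ← sum_extZ (k := k) _ (fun y hy => by simp [extZ_of_ne g hy])]
  by_cases hx : wt x = k + 1
  · rw [extZ_of_eq _ hx, Matrix.mulVec, dotProduct]
    refine Finset.sum_congr rfl fun y _ => ?_
    have hy : wt y.1 = k := y.2
    simp [upOp, Cov, hx, hy, extZ_coe]
  · rw [extZ_of_ne _ hx]
    refine (Finset.sum_eq_zero fun y _ => if_neg ?_).symm
    have hy : wt y.1 = k := y.2
    rintro ⟨-, h⟩
    omega

lemma extZ_upPathAux (n i d : ℕ) (g : Slice n i → ℝ) :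
    extZ ((upPathAux n i d).mulVec g) = (upL n ^ d) (extZ g) := by
  induction d with
  | zero =>
    show extZ ((1 : Matrix (Slice n i) (Slice n i) ℝ).mulVec g) = _
    simp
  | succ d ih =>
    show extZ ((upOp n (i + d) * upPathAux n i d).mulVec g) = _
    rw [← Matrix.mulVec_mulVec, extZ_upOp, ih, pow_succ']
    rfl

lemma extZ_cast_mulVec {n i a b : ℕ} (h : a = b)
    (h' : Matrix (Slice n a) (Slice n i) ℝ = Matrix (Slice n b) (Slice n i) ℝ)
    (M : Matrix (Slice n a) (Slice n i) ℝ) (g : Slice n i → ℝ) :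
    extZ ((cast h' M).mulVec g) = extZ (M.mulVec g) := by
  subst h
  rfl

/-- `χ_{n,S}` extended by zero to the cube. -/
noncomputable def chiZ (n : ℕ) (S : Finset ℕ) : (Fin n → Bool) → ℝ := extZ (chi n S)

lemma extZ_basisVec {n k : ℕ} {S : Finset ℕ} (h : S.card ≤ k) :
    extZ (basisVec n k S) = (upL n ^ (k - S.card)) (chiZ n S) := by
  rw [basisVec, upPath, dif_pos h, extZ_cast_mulVec (Nat.add_sub_cancel' h), extZ_upPathAux]
  rfl

/-- The Fourier coefficient of an admissible `S` as a ratio of sums over the whole cube. -/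
lemma fourierSlice_eq {n k : ℕ} (f : Slice n k → ℝ) {S : Finset ℕ}
    (h : IsH n (min k (n - k)) S) :
    fourierSlice n k f S = (∑ x, extZ f x * (upL n ^ (k - S.card)) (chiZ n S) x) /
      Real.sqrt (∑ x, (upL n ^ (k - S.card)) (chiZ n S) x ^ 2) := by
  have hc : S.card ≤ k := h.2.1.trans (min_le_left _ _)
  rw [fourierSlice, if_pos h, sum_slice_mul]
  simp only [sq, sum_slice_mul, extZ_basisVec hc]

/-! ### The recursion for `χ` -/

lemma chiZ_not_mem_false {n : ℕ} {S : Finset ℕ} (hS : n + 1 ∉ S) (x : Fin n → Bool) :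
    chiZ (n + 1) S (sn x false) = chiZ n S x := by
  by_cases h : wt x = S.card
  · have h' : wt (sn x false) = S.card := by rw [wt_sn_false, h]
    rw [chiZ, extZ_of_eq _ h', chiZ, extZ_of_eq _ h]
    simp only [chi, dif_neg hS]
    simp [dropLast]
  · have h' : wt (sn x false) ≠ S.card := by rwa [wt_sn_false]
    rw [chiZ, extZ_of_ne _ h', chiZ, extZ_of_ne _ h]

lemma chiZ_not_mem_true {n : ℕ} {S : Finset ℕ} (hS : n + 1 ∉ S) (x : Fin n → Bool) :
    chiZ (n + 1) S (sn x true) = 0 := by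
  unfold chiZ extZ
  split_ifs with h
  · simp only [chi, dif_neg hS]
    simp
  · rfl

lemma chiZ_mem_true {n : ℕ} {S : Finset ℕ} (hS : n + 1 ∈ S) (x : Fin n → Bool) :
    chiZ (n + 1) S (sn x true) = chiZ n (S.erase (n + 1)) x := by
  have hc := Finset.card_erase_add_one hS
  by_cases h : wt x = (S.erase (n + 1)).card
  · have h' : wt (sn x true) = S.card := by rw [wt_sn_true]; omega
    rw [chiZ, extZ_of_eq _ h', chiZ, extZ_of_eq _ h]
    simp only [chi, dif_pos hS]
    simp [dropLastT]
  · have h' : wt (sn x true) ≠ S.card := by rw [wt_sn_true]; omega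
    rw [chiZ, extZ_of_ne _ h', chiZ, extZ_of_ne _ h]

lemma chiZ_mem_false {n : ℕ} {S : Finset ℕ} (hS : n + 1 ∈ S) (x : Fin n → Bool) :
    chiZ (n + 1) S (sn x false)
      = -(upL n (chiZ n (S.erase (n + 1))) x) / ((n : ℝ) + 1 - 2 * S.card + 1) := by
  have hc := Finset.card_erase_add_one hS
  rw [chiZ, chiZ, ← extZ_upOp]
  by_cases h : wt x = S.card
  · have h1 : wt (sn x false) = S.card := by rw [wt_sn_false, h]
    have h2 : wt x = (S.erase (n + 1)).card + 1 := by omega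
    rw [extZ_of_eq _ h1, extZ_of_eq _ h2]
    simp only [chi, dif_pos hS]
    simp [dropLast, Matrix.mulVec, dotProduct, upOp]
  · have h1 : wt (sn x false) ≠ S.card := by rwa [wt_sn_false]
    have h2 : wt x ≠ (S.erase (n + 1)).card + 1 := by omega
    rw [extZ_of_ne _ h1, extZ_of_ne _ h2]
    simp

/-! ### Lifts of harmonic vectors -/

lemma upL_pow_support {n s : ℕ} {g : (Fin n → Bool) → ℝ} (hg : ∀ x, wt x ≠ s → g x = 0)
    (j : ℕ) : ∀ x, wt x ≠ s + j → (upL n ^ j) g x = 0 := by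
  induction j with
  | zero => simpa using hg
  | succ j ih =>
    intro x hx
    rw [pow_succ', Module.End.mul_apply, upL_apply]
    refine Finset.sum_eq_zero fun y _ => ?_
    split_ifs with h
    · exact ih y (by have := h.2; omega)
    · rfl

/-- For `g` harmonic (annihilated by the down operator) on the `s`-th slice, the down operator undoes
one up operator up to a scalar: `P↓ (P↑)^{j+1} g = (j + 1)(n - 2s - j) (P↑)^j g`. -/
lemma downL_upL_pow {n s : ℕ} {g : (Fin n → Bool) → ℝ} (hg : ∀ x, wt x ≠ s → g x = 0)
    (hD : downL n g = 0) (j : ℕ) :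
    downL n ((upL n ^ (j + 1)) g) = (((j : ℝ) + 1) * ((n : ℝ) - 2 * s - j)) • (upL n ^ j) g := by
  have key : ∀ j : ℕ, downL n ((upL n ^ (j + 1)) g) = upL n (downL n ((upL n ^ j) g)) +
      ((n : ℝ) - 2 * (s + j)) • (upL n ^ j) g := by
    intro j
    funext x
    rw [pow_succ', Module.End.mul_apply, downL_upL, Pi.add_apply, Pi.smul_apply, smul_eq_mul]
    congr 1
    by_cases hx : wt x = s + j
    · rw [hx]; push_cast; rfl
    · simp [upL_pow_support hg j x hx]
  induction j with
  | zero => rw [key]; simp [hD]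
  | succ j ih =>
    rw [key, ih, map_smul, ← Module.End.mul_apply, ← pow_succ', ← add_smul]
    congr 1
    push_cast
    ring

/-- The ratio of the squared norms of consecutive lifts of a harmonic vector. -/
lemma sum_sq_upL_pow_succ {n s : ℕ} {g : (Fin n → Bool) → ℝ} (hg : ∀ x, wt x ≠ s → g x = 0)
    (hD : downL n g = 0) (j : ℕ) :
    ∑ x, (upL n ^ (j + 1)) g x ^ 2
      = (((j : ℝ) + 1) * ((n : ℝ) - 2 * s - j)) * ∑ x, (upL n ^ j) g x ^ 2 := by
  have h : ∑ x, (upL n ^ (j + 1)) g x ^ 2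
      = ∑ x, (upL n ^ j) g x * downL n ((upL n ^ (j + 1)) g) x := by
    rw [← sum_upL_mul, ← Module.End.mul_apply, ← pow_succ']
    simp only [sq]
  rw [h, downL_upL_pow hg hD, Finset.mul_sum]
  refine Finset.sum_congr rfl fun x _ => ?_
  rw [Pi.smul_apply, smul_eq_mul]
  ring

lemma chiZ_support (n : ℕ) (S : Finset ℕ) : ∀ x, wt x ≠ S.card → chiZ n S x = 0 :=
  fun _ hx => extZ_of_ne _ hx

/-! ### Admissible sets and harmonicity of `χ` -/

lemma sort_insert_last {S : Finset ℕ} {m : ℕ} (h : ∀ a ∈ S, a < m) :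
    (insert m S).sort (· ≤ ·) = S.sort (· ≤ ·) ++ [m] := by
  have hm : m ∉ S := fun hm => lt_irrefl _ (h m hm)
  refine List.Perm.eq_of_pairwise' (Finset.pairwise_sort _ _) ?_ ?_
  · rw [List.pairwise_append]
    refine ⟨Finset.pairwise_sort _ _, by simp, fun a ha b hb => ?_⟩
    rw [List.mem_singleton.1 hb]
    exact (h a ((Finset.mem_sort _).1 ha)).le
  · refine (List.perm_ext_iff_of_nodup (Finset.sort_nodup _ _) ?_).2 fun a => ?_
    · rw [List.nodup_append]
      refine ⟨Finset.sort_nodup _ _, by simp, fun a ha b hb => ?_⟩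
      rw [List.mem_singleton.1 hb]
      exact (h a ((Finset.mem_sort _).1 ha)).ne
    · simp [or_comm]

/-- Adding the new largest element `n + 1` only adds the last of the inequalities `s_j ≥ 2j`. -/
lemma isH_insert_iff {S : Finset ℕ} {n k : ℕ} (h : S ⊆ Finset.Icc 1 n) :
    IsH (n + 1) (k + 1) (insert (n + 1) S) ↔ IsH n k S ∧ 2 * (S.card + 1) ≤ n + 1 := by
  have hlt : ∀ a ∈ S, a < n + 1 := fun a ha => by
    have := (Finset.mem_Icc.1 (h ha)).2; omega
  have hm : n + 1 ∉ S := fun hm => lt_irrefl _ (hlt _ hm)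
  have hlen : (S.sort (· ≤ ·)).length = S.card := Finset.length_sort _
  have h1 : ∀ j < S.card, (S.sort (· ≤ ·) ++ [n + 1]).getD j 0 = (S.sort (· ≤ ·)).getD j 0 :=
    fun j hj => List.getD_append _ _ _ _ (by omega)
  have h2 : (S.sort (· ≤ ·) ++ [n + 1]).getD S.card 0 = n + 1 := by
    rw [List.getD_append_right _ _ _ _ hlen.le, hlen]; simp
  unfold IsH
  rw [Finset.card_insert_of_notMem hm, sort_insert_last hlt]
  constructor
  · rintro ⟨-, hc, hj⟩
    refine ⟨⟨h, by omega, fun j hjc => ?_⟩, ?_⟩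
    · rw [← h1 j hjc]; exact hj j (by omega)
    · have := hj S.card (by omega); rwa [h2] at this
  · rintro ⟨⟨-, hc, hj⟩, hn⟩
    refine ⟨?_, by omega, fun j hjc => ?_⟩
    · intro a ha
      rcases Finset.mem_insert.1 ha with rfl | ha
      · simp
      · have := Finset.mem_Icc.1 (h ha); exact Finset.mem_Icc.2 (by omega)
    · rcases Nat.lt_succ_iff_lt_or_eq.1 hjc with hlt | rfl
      · rw [h1 j hlt]; exact hj j hlt
      · rw [h2]; exact hn

lemma IsH.mono {n n' k k' : ℕ} {S : Finset ℕ} (h : IsH n k S) (hn : n ≤ n') (hk : S.card ≤ k') :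
    IsH n' k' S :=
  ⟨h.1.trans (Finset.Icc_subset_Icc_right hn), hk, h.2.2⟩

/-- `χ_{n,S}` is harmonic for admissible `S`. When `n ∈ S`, the denominator in the recursion is
exactly the scalar of `downL_upL_pow` for one step up, and `s_{|S|} ≥ 2|S|` makes it nonzero. -/
lemma downL_chiZ {n k : ℕ} {S : Finset ℕ} (h : IsH n k S) : downL n (chiZ n S) = 0 := by
  induction n generalizing S k with
  | zero => funext x; simp [downL_apply, Cov, wt]
  | succ n ih =>
    funext x
    obtain ⟨x, b, rfl⟩ := exists_sn x
    by_cases hS : n + 1 ∈ S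
    · obtain ⟨S, hS', rfl⟩ : ∃ T, n + 1 ∉ T ∧ S = insert (n + 1) T :=
        ⟨S.erase (n + 1), by simp, by rw [Finset.insert_erase hS]⟩
      have hsub : S ⊆ Finset.Icc 1 n := fun a ha => by
        have h1 := Finset.mem_Icc.1 (h.1 (Finset.mem_insert_of_mem ha))
        have h2 : a ≠ n + 1 := fun e => hS' (e ▸ ha)
        exact Finset.mem_Icc.2 (by omega)
      obtain ⟨hH, hn⟩ := (isH_insert_iff hsub).1
        (h.mono le_rfl (Nat.le_succ_of_le h.2.1) : IsH (n + 1) (k + 1) _)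
      have hD := ih hH
      have et : (fun y => chiZ (n + 1) (insert (n + 1) S) (sn y true)) = chiZ n S := by
        funext y; rw [chiZ_mem_true hS, Finset.erase_insert hS']
      cases b
      · have ef : (fun y => chiZ (n + 1) (insert (n + 1) S) (sn y false))
            = (-((n : ℝ) - 2 * S.card)⁻¹) • upL n (chiZ n S) := by
          funext y
          rw [chiZ_mem_false hS, Finset.erase_insert hS', Finset.card_insert_of_notMem hS',
            Pi.smul_apply, smul_eq_mul]
          push_cast
          rw [show (n : ℝ) + 1 - 2 * (S.card + 1) + 1 = n - 2 * S.card by ring]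
          ring
        have hU := downL_upL_pow (chiZ_support n S) hD 0
        simp only [zero_add, pow_one, pow_zero, Module.End.one_apply] at hU
        have hpos : (n : ℝ) - 2 * S.card ≠ 0 := by
          have : (2 * (S.card + 1) : ℝ) ≤ n + 1 := by exact_mod_cast hn
          intro h0; linarith
        rw [downL_false, ef, map_smul, hU, chiZ_mem_true hS, Finset.erase_insert hS']
        simp [hpos]
      · rw [downL_true, et, hD]; rfl
    · have hH : IsH n k S := ⟨fun a ha => by
        have h1 := Finset.mem_Icc.1 (h.1 ha)
        have h2 : a ≠ n + 1 := fun e => hS (e ▸ ha)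
        exact Finset.mem_Icc.2 (by omega), h.2⟩
      have hD := ih hH
      have ef : (fun y => chiZ (n + 1) S (sn y false)) = chiZ n S := by
        funext y; exact chiZ_not_mem_false hS y
      have et : (fun y => chiZ (n + 1) S (sn y true)) = 0 := by
        funext y; exact chiZ_not_mem_true hS y
      cases b
      · rw [downL_false, ef, hD, chiZ_not_mem_true hS]; simp
      · rw [downL_true, et, map_zero]; rfl

/-! ### Restrictions of the basis vectors and of `f` -/

/-- The two restrictions of a lift of `χ_{n+1,S}`, for `n + 1 ∉ S`. The exponent is `j + 1` because
the second restriction vanishes for the zeroth lift. -/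
lemma upL_pow_chiZ_not_mem {n : ℕ} {S : Finset ℕ} (hS : n + 1 ∉ S) (j : ℕ) :
    (∀ x, (upL (n + 1) ^ (j + 1)) (chiZ (n + 1) S) (sn x false)
      = (upL n ^ (j + 1)) (chiZ n S) x) ∧
    (∀ x, (upL (n + 1) ^ (j + 1)) (chiZ (n + 1) S) (sn x true)
      = ((j : ℝ) + 1) * (upL n ^ j) (chiZ n S) x) := by
  induction j with
  | zero =>
    have ef : (fun y => chiZ (n + 1) S (sn y false)) = chiZ n S := by
      funext y; exact chiZ_not_mem_false hS y
    have et : (fun y => chiZ (n + 1) S (sn y true)) = 0 := by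
      funext y; exact chiZ_not_mem_true hS y
    refine ⟨fun x => ?_, fun x => ?_⟩
    · simp [upL_false, ef]
    · simp [upL_true, et, chiZ_not_mem_false hS]
  | succ j ih =>
    have ef := funext ih.1
    have et : (fun x => (upL (n + 1) ^ (j + 1)) (chiZ (n + 1) S) (sn x true))
        = ((j : ℝ) + 1) • (upL n ^ j) (chiZ n S) := funext ih.2
    refine ⟨fun x => ?_, fun x => ?_⟩
    · rw [pow_succ', Module.End.mul_apply, upL_false, ef, pow_succ' _ (j + 1)]; rfl
    · rw [pow_succ', Module.End.mul_apply, upL_true, et, ih.1, map_smul, ← Module.End.mul_apply,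
        ← pow_succ', Pi.smul_apply, smul_eq_mul]
      push_cast; ring

/-- The two restrictions of a lift of `χ_{n+1,S ∪ {n+1}}`. -/
lemma upL_pow_chiZ_insert {n : ℕ} {S : Finset ℕ} (hS : n + 1 ∉ S) (j : ℕ) :
    (∀ x, (upL (n + 1) ^ j) (chiZ (n + 1) (insert (n + 1) S)) (sn x false)
      = -((n : ℝ) - 2 * S.card)⁻¹ * (upL n ^ (j + 1)) (chiZ n S) x) ∧
    (∀ x, (upL (n + 1) ^ j) (chiZ (n + 1) (insert (n + 1) S)) (sn x true)
      = (1 - j * ((n : ℝ) - 2 * S.card)⁻¹) * (upL n ^ j) (chiZ n S) x) := by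
  have hm := Finset.mem_insert_self (n + 1) S
  induction j with
  | zero =>
    refine ⟨fun x => ?_, fun x => ?_⟩
    · simp only [pow_zero, Module.End.one_apply, zero_add, pow_one]
      rw [chiZ_mem_false hm, Finset.erase_insert hS, Finset.card_insert_of_notMem hS]
      push_cast
      rw [show (n : ℝ) + 1 - 2 * (S.card + 1) + 1 = n - 2 * S.card by ring]
      ring
    · simp [chiZ_mem_true hm, Finset.erase_insert hS]
  | succ j ih =>
    have ef : (fun x => (upL (n + 1) ^ j) (chiZ (n + 1) (insert (n + 1) S)) (sn x false))
        = (-((n : ℝ) - 2 * S.card)⁻¹) • (upL n ^ (j + 1)) (chiZ n S) := funext ih.1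
    have et : (fun x => (upL (n + 1) ^ j) (chiZ (n + 1) (insert (n + 1) S)) (sn x true))
        = (1 - j * ((n : ℝ) - 2 * S.card)⁻¹) • (upL n ^ j) (chiZ n S) := funext ih.2
    refine ⟨fun x => ?_, fun x => ?_⟩
    · rw [pow_succ', Module.End.mul_apply, upL_false, ef, map_smul, ← Module.End.mul_apply,
        ← pow_succ', Pi.smul_apply, smul_eq_mul]
    · rw [pow_succ', Module.End.mul_apply, upL_true, et, ih.1, map_smul, ← Module.End.mul_apply,
        ← pow_succ', Pi.smul_apply, smul_eq_mul]
      push_cast; ring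

lemma catFun_one {n : ℕ} (x : Fin n → Bool) (z : Fin 1 → Bool) :
    catFun (n + 1) 1 x z = sn x (z 0) := by
  funext i
  refine Fin.lastCases ?_ (fun i => ?_) i
  · simp [catFun]
  · simp [catFun]

lemma extZ_restrict {n k : ℕ} (f : Slice (n + 1) k → ℝ) (z : Fin 1 → Bool) (hz : wt z ≤ k)
    (x : Fin n → Bool) :
    extZ (n := n) (restrict (n + 1) k 1 f z) x = extZ f (sn x (z 0)) := by
  have hw : wt (sn x (z 0)) = wt x + wt z := by
    cases h : z 0
    · rw [wt_sn_false]; simp [wt, h]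
    · rw [wt_sn_true]; simp [wt, Finset.filter_singleton, h]
  by_cases h : wt x = k - wt z
  · rw [extZ_of_eq _ h]
    unfold restrict extZ
    simp only [catFun_one]
  · rw [extZ_of_ne _ h, extZ_of_ne _ (by omega)]

/-! ### The identity between the coefficients -/

/-- The closing computation. Here `a = ⟨f₀, B_{m,k}⟩`, `b = ⟨f₁, B_{m,k-1}⟩` and
`M = ‖B_{m,k-1}‖²`, so that `p q M = ‖B_{m,k}‖²`. If `M = 0`, every quotient is `0`. -/
lemma fourier_algebra {a b p q r M : ℝ} (hp : 0 < p) (hq : 0 < q) (hr : 0 < r) (hM : 0 ≤ M) :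
    a / √(p * q * M) = 1 / √(p + q) * (√q * ((a + p * b) / √(p * q * M + p ^ 2 * M))
      - √p * ((-r⁻¹ * a + q * r⁻¹ * b) / √(r⁻¹ ^ 2 * (p * q * M) + (q * r⁻¹) ^ 2 * M))) ∧
    b / √M = 1 / √(p + q) *
      (√q * ((-r⁻¹ * a + q * r⁻¹ * b) / √(r⁻¹ ^ 2 * (p * q * M) + (q * r⁻¹) ^ 2 * M))
      + √p * ((a + p * b) / √(p * q * M + p ^ 2 * M))) := by
  have e1 : p * q * M + p ^ 2 * M = p * (p + q) * M := by ring
  have e2 : r⁻¹ ^ 2 * (p * q * M) + (q * r⁻¹) ^ 2 * M = r⁻¹ ^ 2 * (q * (p + q) * M) := by ring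
  rw [e1, e2, Real.sqrt_mul (by positivity), Real.sqrt_mul (by positivity),
    Real.sqrt_mul (by positivity), Real.sqrt_mul (by positivity), Real.sqrt_mul (by positivity),
    Real.sqrt_mul (by positivity), Real.sqrt_mul (by positivity), Real.sqrt_sq (by positivity)]
  rcases hM.eq_or_lt with rfl | hM
  · simp
  -- with square roots as new variables, the identity is one of rational functions
  have hpq : 0 < p + q := by positivity
  obtain ⟨P, hP, rfl⟩ : ∃ P, 0 < P ∧ p = P ^ 2 :=
    ⟨√p, by positivity, (Real.sq_sqrt hp.le).symm⟩
  obtain ⟨Q, hQ, rfl⟩ : ∃ Q, 0 < Q ∧ q = Q ^ 2 :=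
    ⟨√q, by positivity, (Real.sq_sqrt hq.le).symm⟩
  have hW2 := Real.sq_sqrt hpq.le
  have hW : 0 < √(P ^ 2 + Q ^ 2) := by positivity
  have hN : 0 < √M := by positivity
  rw [Real.sqrt_sq hP.le, Real.sqrt_sq hQ.le]
  generalize √(P ^ 2 + Q ^ 2) = W at *
  generalize √M = N at *
  constructor
  · field_simp
    rw [hW2]; ring
  · field_simp
    rw [hW2]; ring

/-- For `S ∈ H_{n-1,min{k,n-k}}` with `|S| < min{k,n-k}`:
`f̂₀(S) = (1/√(n-2|S|))(√(n-k-|S|)·f̂(S) - √(k-|S|)·f̂(S ∪ {n}))` and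
`f̂₁(S) = (1/√(n-2|S|))(√(n-k-|S|)·f̂(S ∪ {n}) + √(k-|S|)·f̂(S))`. -/
theorem stmt14 (n k : ℕ) (hn : 1 ≤ n) (hk : k ≤ n) (f : Slice n k → ℝ)
    (S : Finset ℕ) (hS : IsH (n - 1) (min k (n - k)) S)
    (hcard : S.card < min k (n - k)) :
    fourierSliceRestrict n k 1 f (fun _ => false) S
        = (1 / Real.sqrt ((n : ℝ) - 2 * S.card)) *
            (Real.sqrt ((n : ℝ) - k - S.card) * fourierSlice n k f S
              - Real.sqrt ((k : ℝ) - S.card) * fourierSlice n k f (insert n S)) ∧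
    fourierSliceRestrict n k 1 f (fun _ => true) S
        = (1 / Real.sqrt ((n : ℝ) - 2 * S.card)) *
            (Real.sqrt ((n : ℝ) - k - S.card) * fourierSlice n k f (insert n S)
              + Real.sqrt ((k : ℝ) - S.card) * fourierSlice n k f S) := by
  obtain ⟨m, rfl⟩ : ∃ m, n = m + 1 := ⟨n - 1, by omega⟩
  rw [Nat.add_sub_cancel] at hS
  have hlt := hcard
  rw [lt_min_iff] at hlt
  obtain ⟨hsk, hsn⟩ := hlt
  -- `χ_{n,S}` is lifted `j + 1` times to level `k`, and `χ_{n,S ∪ {n}}` is lifted `j` times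
  obtain ⟨j, rfl⟩ : ∃ j, k = S.card + j + 1 := ⟨k - S.card - 1, by omega⟩
  have hm : m + 1 ∉ S := fun h => by
    have := (Finset.mem_Icc.1 (hS.1 h)).2; omega
  have hcT : (insert (m + 1) S).card = S.card + 1 := Finset.card_insert_of_notMem hm
  have hT : IsH (m + 1) (min (S.card + j + 1) (m + 1 - (S.card + j + 1))) (insert (m + 1) S) :=
    ((isH_insert_iff hS.1).2 ⟨hS, by omega⟩).mono le_rfl (by omega)
  have w0 : wt (fun _ : Fin 1 => false) = 0 := by simp [wt]
  have w1 : wt (fun _ : Fin 1 => true) = 1 := by simp [wt]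
  have hD := downL_chiZ hS
  have hN := sum_sq_upL_pow_succ (chiZ_support m S) hD j
  obtain ⟨hSf, hSt⟩ := upL_pow_chiZ_not_mem hm j
  obtain ⟨hTf, hTt⟩ := upL_pow_chiZ_insert hm j
  have hr : (0 : ℝ) < (m : ℝ) - 2 * S.card := by
    have : 2 * S.card < m := by omega
    have : (2 * S.card : ℝ) < m := by exact_mod_cast this
    linarith
  have hq : (0 : ℝ) < (m : ℝ) - 2 * S.card - j := by
    have : 2 * S.card + j < m := by omega
    have : (2 * S.card + j : ℝ) < m := by exact_mod_cast this
    linarith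
  have hp : (0 : ℝ) < (j : ℝ) + 1 := by positivity
  have hMnn : 0 ≤ ∑ x, (upL m ^ j) (chiZ m S) x ^ 2 := by positivity
  have hcoef : 1 - (j : ℝ) * ((m : ℝ) - 2 * S.card)⁻¹
      = ((m : ℝ) - 2 * S.card - j) * ((m : ℝ) - 2 * S.card)⁻¹ := by
    field_simp
  obtain ⟨A0, A1⟩ := fourier_algebra (a := ∑ x, extZ f (sn x false) * (upL m ^ (j + 1)) (chiZ m S) x)
    (b := ∑ x, extZ f (sn x true) * (upL m ^ j) (chiZ m S) x) hp hq hr hMnn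
  have F0 : fourierSliceRestrict (m + 1) (S.card + j + 1) 1 f (fun _ => false) S
      = (∑ x, extZ f (sn x false) * (upL m ^ (j + 1)) (chiZ m S) x) /
        √(∑ x, (upL m ^ (j + 1)) (chiZ m S) x ^ 2) := by
    refine (fourierSlice_eq (n := m) _ (hS.mono le_rfl (by rw [w0]; omega))).trans ?_
    rw [show S.card + j + 1 - wt (fun _ : Fin 1 => false) - S.card = j + 1 by rw [w0]; omega]
    simp only [extZ_restrict f (fun _ => false) (by rw [w0]; omega)]
  have F1 : fourierSliceRestrict (m + 1) (S.card + j + 1) 1 f (fun _ => true) S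
      = (∑ x, extZ f (sn x true) * (upL m ^ j) (chiZ m S) x) /
        √(∑ x, (upL m ^ j) (chiZ m S) x ^ 2) := by
    refine (fourierSlice_eq (n := m) _ (hS.mono le_rfl (by rw [w1]; omega))).trans ?_
    rw [show S.card + j + 1 - wt (fun _ : Fin 1 => true) - S.card = j by rw [w1]; omega]
    simp only [extZ_restrict f (fun _ => true) (by rw [w1]; omega)]
  have GS : fourierSlice (m + 1) (S.card + j + 1) f S
      = (∑ x, extZ f (sn x false) * (upL m ^ (j + 1)) (chiZ m S) x
          + ((j : ℝ) + 1) * ∑ x, extZ f (sn x true) * (upL m ^ j) (chiZ m S) x) /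
        √(∑ x, (upL m ^ (j + 1)) (chiZ m S) x ^ 2
          + ((j : ℝ) + 1) ^ 2 * ∑ x, (upL m ^ j) (chiZ m S) x ^ 2) := by
    rw [fourierSlice_eq _ (hS.mono (Nat.le_succ m) hS.2.1),
      show S.card + j + 1 - S.card = j + 1 by omega]
    simp only [sum_sn, hSf, hSt, mul_pow, Finset.mul_sum, mul_left_comm]
  have GT : fourierSlice (m + 1) (S.card + j + 1) f (insert (m + 1) S)
      = (-((m : ℝ) - 2 * S.card)⁻¹ * ∑ x, extZ f (sn x false) * (upL m ^ (j + 1)) (chiZ m S) x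
          + ((m : ℝ) - 2 * S.card - j) * ((m : ℝ) - 2 * S.card)⁻¹ *
            ∑ x, extZ f (sn x true) * (upL m ^ j) (chiZ m S) x) /
        √(((m : ℝ) - 2 * S.card)⁻¹ ^ 2 * ∑ x, (upL m ^ (j + 1)) (chiZ m S) x ^ 2
          + (((m : ℝ) - 2 * S.card - j) * ((m : ℝ) - 2 * S.card)⁻¹) ^ 2 *
            ∑ x, (upL m ^ j) (chiZ m S) x ^ 2) := by
    rw [fourierSlice_eq _ hT, hcT, show S.card + j + 1 - (S.card + 1) = j by omega]
    simp only [sum_sn, hTf, hTt, hcoef]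
    congr 1
    · congr 1 <;> rw [Finset.mul_sum] <;> exact Finset.sum_congr rfl fun x _ => by ring
    · congr 2 <;> rw [Finset.mul_sum] <;> exact Finset.sum_congr rfl fun x _ => by ring
  have c1 : ((m + 1 : ℕ) : ℝ) - 2 * S.card = ((j : ℝ) + 1) + ((m : ℝ) - 2 * S.card - j) := by
    push_cast; ring
  have c2 : ((m + 1 : ℕ) : ℝ) - ((S.card + j + 1 : ℕ) : ℝ) - S.card
      = (m : ℝ) - 2 * S.card - j := by
    push_cast; ring
  have c3 : ((S.card + j + 1 : ℕ) : ℝ) - S.card = (j : ℝ) + 1 := by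
    push_cast; ring
  rw [F0, F1, GS, GT, c1, c2, c3, hN]
  exact ⟨A0, A1⟩
end
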